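/- Structurality of the RNmatrix consequence relation for K: for every substitution ρ, every set of formulas Γ and every formula A, if every valuation v ∈ F_K designating all of Γ designates A, then every valuation v ∈ F_K designating all of { ρ(B) : B ∈ Γ } designates ρ(A). -/

import Mathlib

/-- Formulas of the modal language: propositional variables, negation,
the modality ⊖ (here `box`), and implication. -/
inductive Form : Type
  | var : ℕ → Form
  | neg : Form → Form
  | box : Form → Form
  | imp : Form → Form → Form

/-- A valuation `v = (v1, v2)` over the 4-valued Nmatrix for the minimal modal
logic M: `v1` behaves classically on ¬ and →, and `v1(⊖A) = v2(A)`;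
`v2` is otherwise unconstrained. -/
structure Val where
  v1 : Form → Fin 2
  v2 : Form → Fin 2
  neg_eq : ∀ A, v1 (Form.neg A) = 1 - v1 A
  imp_eq : ∀ A B, v1 (Form.imp A B) = max (1 - v1 A) (v1 B)
  box_eq : ∀ A, v1 (Form.box A) = v2 A

/-- The restriction defining F_K: valuations satisfying the (K) condition. -/
def FK (v : Val) : Prop :=
  ∀ A B : Form, v.v2 (A.imp B) ≤ max (1 - v.v2 A) (v.v2 B)

/-- A substitution: the endomorphism of the formula algebra determined by a
map from propositional variables to formulas. -/
def subst (ρ : ℕ → Form) : Form → Form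
  | .var n => ρ n
  | .neg A => .neg (subst ρ A)
  | .box A => .box (subst ρ A)
  | .imp A B => .imp (subst ρ A) (subst ρ B)

/-- The pullback `v ∘ ρ` of a valuation along a substitution. It designates `A` exactly when `v`
designates `subst ρ A`, so a `ρ`-instance of a consequence at `v` is the consequence at `v ∘ ρ`. -/
def Val.pullback (v : Val) (ρ : ℕ → Form) : Val where
  v1 A := v.v1 (subst ρ A)
  v2 A := v.v2 (subst ρ A)
  neg_eq A := v.neg_eq (subst ρ A)
  imp_eq A B := v.imp_eq (subst ρ A) (subst ρ B)
  box_eq A := v.box_eq (subst ρ A)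

theorem FK.pullback {v : Val} (hv : FK v) (ρ : ℕ → Form) : FK (v.pullback ρ) :=
  fun A B => hv (subst ρ A) (subst ρ B)

theorem RMK_consequence_structural_general {F : Val → Prop} {ρ : ℕ → Form}
    (hF : ∀ v, F v → F (v.pullback ρ)) (Γ : Set Form) (A : Form)
    (h : ∀ v : Val, F v → (∀ B ∈ Γ, v.v1 B = 1) → v.v1 A = 1) :
    ∀ v : Val, F v → (∀ B ∈ Γ, v.v1 (subst ρ B) = 1) → v.v1 (subst ρ A) = 1 :=
  fun v hv hΓ => h (v.pullback ρ) (hF v hv) hΓ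

/-- Structurality of the RNmatrix consequence relation for K. -/
theorem RMK_consequence_structural (ρ : ℕ → Form) (Γ : Set Form) (A : Form)
    (h : ∀ v : Val, FK v → (∀ B ∈ Γ, v.v1 B = 1) → v.v1 A = 1) :
    ∀ v : Val, FK v → (∀ B ∈ Γ, v.v1 (subst ρ B) = 1) →
      v.v1 (subst ρ A) = 1 :=
  RMK_consequence_structural_general (fun _ hv => hv.pullback ρ) Γ A h
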